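/- The quantum mutual information I(ρ_SA) = S(ρ_S) + S(ρ_A) − S(ρ_SA) is monotonically nonincreasing under local trace-preserving completely positive maps on the system: I((E ⊗ id)(ρ_SA)) ≤ I(ρ_SA). -/

import Mathlib

open Matrix
open scoped ComplexOrder

/-- The functional-calculus logarithm of a Hermitian matrix, restricted to its support
(eigenvalue `0` is sent to `0` since `Real.log 0 = 0`); junk value `0` off Hermitian. -/
noncomputable def matLog {n : Type*} [Fintype n] [DecidableEq n]
    (A : Matrix n n ℂ) : Matrix n n ℂ :=
  if h : A.IsHermitian then
    (h.eigenvectorUnitary : Matrix n n ℂ) *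
      Matrix.diagonal (fun i => (Real.log (h.eigenvalues i) : ℂ)) *
      (star h.eigenvectorUnitary : Matrix n n ℂ)
  else 0

/-- The von Neumann entropy `S(ρ) = −Tr(ρ log ρ)`. -/
noncomputable def vnEntropy {n : Type*} [Fintype n] [DecidableEq n]
    (ρ : Matrix n n ℂ) : ℝ :=
  -(((ρ * matLog ρ).trace).re)

/-- Partial trace over the second factor. -/
noncomputable def ptrA {m k : Type*} [Fintype m] [Fintype k]
    (M : Matrix (m × k) (m × k) ℂ) : Matrix m m ℂ :=
  Matrix.of fun a c => ∑ b, M (a, b) (c, b)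

/-- Partial trace over the first factor. -/
noncomputable def ptrB {m k : Type*} [Fintype m] [Fintype k]
    (M : Matrix (m × k) (m × k) ℂ) : Matrix k k ℂ :=
  Matrix.of fun b d => ∑ a, M (a, b) (a, d)

/-- Quantum mutual information `I(ρ_SA) = S(ρ_S) + S(ρ_A) − S(ρ_SA)`. -/
noncomputable def mutInfo {m k : ℕ} (M : Matrix (Fin m × Fin k) (Fin m × Fin k) ℂ) : ℝ :=
  vnEntropy (ptrA M) + vnEntropy (ptrB M) - vnEntropy M

/-- The extension `E ⊗ id` of a map `E` on the first tensor factor. -/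
noncomputable def tensorId {m k : Type*} [Fintype m] [Fintype k]
    (E : Matrix m m ℂ → Matrix m m ℂ) (M : Matrix (m × k) (m × k) ℂ) :
    Matrix (m × k) (m × k) ℂ :=
  Matrix.of fun p q => E (Matrix.of fun a c => M (a, p.2) (c, q.2)) p.1 q.1

namespace MI
open scoped Kronecker

set_option linter.unusedSectionVars false

variable {n : Type*} [Fintype n] [DecidableEq n]

/-- The quadratic functional whose supremum is the resolvent form of the relative modular operator. -/
noncomputable def J (t : ℝ) (ρ σ X : Matrix n n ℂ) : ℝ :=
  2 * (ρ * X).trace.re - (σ * (X * Xᴴ)).trace.re - t * (ρ * (Xᴴ * X)).trace.re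

/-- diagonal matrix with real entries -/
noncomputable def dg (p : n → ℝ) : Matrix n n ℂ := Matrix.diagonal (fun i => (p i : ℂ))

lemma tr1 (p : n → ℝ) (A B : Matrix n n ℂ) :
    (dg p * (Aᴴ * B)).trace.re = ∑ j, ∑ i, p i * (star (A j i) * B j i).re := by
  rw [Finset.sum_comm]
  simp only [dg, Matrix.trace, Matrix.diag, Matrix.diagonal_mul]
  simp only [Matrix.mul_apply,
    Matrix.conjTranspose_apply, Complex.re_sum, Complex.re_ofReal_mul, Finset.mul_sum]

lemma tr2 (q : n → ℝ) (B : Matrix n n ℂ) :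
    (dg q * (B * Bᴴ)).trace.re = ∑ j, ∑ i, q j * (star (B j i) * B j i).re := by
  simp only [dg, Matrix.trace, Matrix.diag, Matrix.diagonal_mul]
  simp only [Matrix.mul_apply,
    Matrix.conjTranspose_apply, Complex.re_sum, Complex.re_ofReal_mul, Finset.mul_sum]
  simp only [mul_comm]

lemma J_eq (t : ℝ) (U W X : Matrix n n ℂ) (p q : n → ℝ)
    (hU : U * Uᴴ = 1) (hW : W * Wᴴ = 1) :
    J t (U * dg p * Uᴴ) (W * dg q * Wᴴ) X =
      ∑ j, ∑ i, (2 * (p i * (star ((Wᴴ * U) j i) * (Wᴴ * X * U) j i).re)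
        - (q j + t * p i) * Complex.normSq ((Wᴴ * X * U) j i)) := by
  have h1 : (U * dg p * Uᴴ * X).trace = (dg p * ((Wᴴ * U)ᴴ * (Wᴴ * X * U))).trace := by
    rw [Matrix.mul_assoc, Matrix.mul_assoc, Matrix.trace_mul_comm]
    congr 1
    simp only [Matrix.conjTranspose_mul, Matrix.conjTranspose_conjTranspose, Matrix.mul_assoc]
    rw [← Matrix.mul_assoc W, hW, Matrix.one_mul]
  have h2 : (W * dg q * Wᴴ * (X * Xᴴ)).trace =
      (dg q * ((Wᴴ * X * U) * (Wᴴ * X * U)ᴴ)).trace := by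
    rw [Matrix.mul_assoc, Matrix.mul_assoc, Matrix.trace_mul_comm]
    congr 1
    simp only [Matrix.conjTranspose_mul, Matrix.conjTranspose_conjTranspose, Matrix.mul_assoc]
    rw [← Matrix.mul_assoc U, hU, Matrix.one_mul]
  have h3 : (U * dg p * Uᴴ * (Xᴴ * X)).trace =
      (dg p * ((Wᴴ * X * U)ᴴ * (Wᴴ * X * U))).trace := by
    rw [Matrix.mul_assoc, Matrix.mul_assoc, Matrix.trace_mul_comm]
    congr 1
    simp only [Matrix.conjTranspose_mul, Matrix.conjTranspose_conjTranspose, Matrix.mul_assoc]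
    rw [← Matrix.mul_assoc W, hW, Matrix.one_mul]
  rw [J, h1, h2, h3, tr1, tr2, tr1]
  simp only [Finset.mul_sum, ← Finset.sum_sub_distrib]
  refine Finset.sum_congr rfl fun j _ => Finset.sum_congr rfl fun i _ => ?_
  simp [Complex.normSq_apply]
  ring

/-- The resolvent form. -/
noncomputable def Q (t : ℝ) (c : n → n → ℝ) (p q : n → ℝ) : ℝ :=
  ∑ j, ∑ i, c j i * p i ^ 2 / (q j + t * p i)

/-- overlaps -/
noncomputable def ov (U W : Matrix n n ℂ) (j i : n) : ℝ := Complex.normSq ((Wᴴ * U) j i)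

lemma J_le (t : ℝ) (ht : 0 < t) (U W X : Matrix n n ℂ) (p q : n → ℝ)
    (hp : ∀ i, 0 ≤ p i) (hq : ∀ i, 0 ≤ q i)
    (hU : U * Uᴴ = 1) (hW : W * Wᴴ = 1) :
    J t (U * dg p * Uᴴ) (W * dg q * Wᴴ) X ≤ Q t (ov U W) p q := by
  rw [J_eq t U W X p q hU hW, Q]
  refine Finset.sum_le_sum fun j _ => Finset.sum_le_sum fun i _ => ?_
  rw [ov]
  generalize (Wᴴ * U) j i = g
  generalize (Wᴴ * X * U) j i = x
  have h1 := hp i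
  have h2 := hq j
  generalize p i = a at *
  generalize q j = b at *
  rcases eq_or_lt_of_le (add_nonneg h2 (mul_nonneg ht.le h1)) with h | h
  · have ha : a = 0 := by
      have := mul_nonneg ht.le h1
      have h5 : t * a = 0 := by linarith
      rcases mul_eq_zero.1 h5 with h | h
      · exact absurd h ht.ne'
      · exact h
    rw [← h]; simp [ha]
  · rw [le_div_iff₀ h]
    simp only [Complex.normSq_apply, Complex.star_def, Complex.mul_re, Complex.conj_re, Complex.conj_im]
    set d := b + t * a
    nlinarith [sq_nonneg (a * g.re - d * x.re), sq_nonneg (a * g.im - d * x.im)]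

lemma exists_J (t : ℝ) (ht : 0 < t) (U W : Matrix n n ℂ) (p q : n → ℝ)
    (hp : ∀ i, 0 ≤ p i) (hq : ∀ i, 0 ≤ q i)
    (hU : U * Uᴴ = 1) (hW : W * Wᴴ = 1) :
    ∃ X, J t (U * dg p * Uᴴ) (W * dg q * Wᴴ) X = Q t (ov U W) p q := by
  let x : Matrix n n ℂ := Matrix.of fun j i => ((p i / (q j + t * p i) : ℝ) : ℂ) * (Wᴴ * U) j i
  have hU' : Uᴴ * U = 1 := mul_eq_one_comm.1 hU
  have hW' : Wᴴ * W = 1 := mul_eq_one_comm.1 hW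
  refine ⟨W * x * Uᴴ, ?_⟩
  have hx : Wᴴ * (W * x * Uᴴ) * U = x := by
    simp only [Matrix.mul_assoc]
    rw [hU', ← Matrix.mul_assoc, hW']; simp
  rw [J_eq t U W _ p q hU hW, Q, hx]
  refine Finset.sum_congr rfl fun j _ => Finset.sum_congr rfl fun i _ => ?_
  rw [ov]
  simp only [x, Matrix.of_apply]
  generalize (Wᴴ * U) j i = g
  have h1 := hp i
  have h2 := hq j
  generalize p i = a at *
  generalize q j = b at *
  rcases eq_or_lt_of_le (add_nonneg h2 (mul_nonneg ht.le h1)) with h | h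
  · rw [← h]; simp
  · simp only [Complex.normSq_apply, Complex.star_def, Complex.mul_re, Complex.conj_re,
      Complex.conj_im, Complex.mul_im, Complex.ofReal_re, Complex.ofReal_im]
    have hd := h.ne'
    generalize b + t * a = d at *
    field_simp
    ring

/-- relative entropy in terms of spectral data -/
noncomputable def RE (c : n → n → ℝ) (p q : n → ℝ) : ℝ :=
  ∑ j, ∑ i, c j i * p i * (Real.log (p i) - Real.log (q j))

/-- interpolating function -/
noncomputable def F (c : n → n → ℝ) (p q : n → ℝ) (T : ℝ) : ℝ :=
  ∑ j, ∑ i, c j i * p i * (Real.log (q j + T * p i) - Real.log (q j))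

lemma F_zero (c : n → n → ℝ) (p q : n → ℝ) : F c p q 0 = 0 := by simp [F]

lemma F_deriv (c : n → n → ℝ) (p q : n → ℝ) (hp : ∀ i, 0 ≤ p i) (hq : ∀ i, 0 ≤ q i)
    (hs : ∀ j i, q j = 0 → c j i * p i = 0) (T : ℝ) (hT : 0 ≤ T) :
    HasDerivAt (F c p q) (Q T c p q) T := by
  unfold F Q
  refine HasDerivAt.fun_sum fun j _ => HasDerivAt.fun_sum fun i _ => ?_
  by_cases h : c j i * p i = 0
  · have : c j i * p i ^ 2 / (q j + T * p i) = 0 := by rw [pow_two, ← mul_assoc, h]; simp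
    rw [this]
    simpa [h] using hasDerivAt_const T (0:ℝ)
  · have hqj : 0 < q j := lt_of_le_of_ne (hq j) fun h' => h (hs j i h'.symm)
    have hpos : 0 < q j + T * p i := by have := mul_nonneg hT (hp i); linarith
    have h1 : HasDerivAt (fun T : ℝ => q j + T * p i) (p i) T := by
      simpa using ((hasDerivAt_id T).mul_const (p i)).const_add (q j)
    rw [pow_two, ← mul_assoc, mul_div_assoc]
    exact ((h1.log hpos.ne').sub_const (Real.log (q j))).const_mul (c j i * p i)

lemma F_tendsto (c : n → n → ℝ) (p q : n → ℝ) (hp : ∀ i, 0 ≤ p i)  :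
    Filter.Tendsto (fun T => F c p q T - (∑ j, ∑ i, c j i * p i) * Real.log T) Filter.atTop
      (nhds (RE c p q)) := by
  have : ∀ T, F c p q T - (∑ j, ∑ i, c j i * p i) * Real.log T =
      ∑ j, ∑ i, c j i * p i * ((Real.log (q j + T * p i) - Real.log T) - Real.log (q j)) := by
    intro T
    simp only [F, Finset.sum_mul, ← Finset.sum_sub_distrib]
    refine Finset.sum_congr rfl fun j _ => Finset.sum_congr rfl fun i _ => ?_
    ring
  simp only [this, RE]
  refine tendsto_finsetSum _ fun j _ => tendsto_finsetSum _ fun i _ => ?_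
  by_cases h : p i = 0
  · simp [h]
  have hpi : 0 < p i := lt_of_le_of_ne (hp i) (Ne.symm h)
  refine Filter.Tendsto.const_mul _ (Filter.Tendsto.sub_const ?_ _)
  have h1 : Filter.Tendsto (fun T : ℝ => Real.log (q j / T + p i)) Filter.atTop
      (nhds (Real.log (p i))) := by
    have h2 : Filter.Tendsto (fun T : ℝ => q j / T + p i) Filter.atTop (nhds (0 + p i)) :=
      (Filter.Tendsto.div_atTop tendsto_const_nhds Filter.tendsto_id).add_const _
    rw [zero_add] at h2
    exact h2.log h
  have h3 : ∀ᶠ T : ℝ in Filter.atTop, q j + T * p i > 0 := by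
    have : Filter.Tendsto (fun T : ℝ => q j + T * p i) Filter.atTop Filter.atTop :=
      Filter.tendsto_atTop_add_const_left _ _ (Filter.tendsto_id.atTop_mul_const hpi)
    exact this.eventually_gt_atTop 0
  refine h1.congr' ?_
  filter_upwards [h3, Filter.eventually_gt_atTop 0] with T hT1 hT2
  rw [← Real.log_div hT1.ne' hT2.ne']
  congr 1
  field_simp

lemma RE_mono (c c' : n → n → ℝ) (p q p' q' : n → ℝ)
    (hp : ∀ i, 0 ≤ p i) (hq : ∀ i, 0 ≤ q i) (hs : ∀ j i, q j = 0 → c j i * p i = 0)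
    (hp' : ∀ i, 0 ≤ p' i) (hq' : ∀ i, 0 ≤ q' i) (hs' : ∀ j i, q' j = 0 → c' j i * p' i = 0)
    (htr : ∑ j, ∑ i, c' j i * p' i = ∑ j, ∑ i, c j i * p i)
    (hQ : ∀ t, 0 < t → Q t c' p' q' ≤ Q t c p q) : RE c' p' q' ≤ RE c p q := by
  have hd : ∀ T, 0 ≤ T → HasDerivAt (fun T => F c p q T - F c' p' q' T)
      (Q T c p q - Q T c' p' q') T := fun T hT =>
    (F_deriv c p q hp hq hs T hT).sub (F_deriv c' p' q' hp' hq' hs' T hT)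
  have hm : MonotoneOn (fun T => F c p q T - F c' p' q' T) (Set.Ici 0) := by
    refine monotoneOn_of_deriv_nonneg (convex_Ici 0) ?_ ?_ ?_
    · exact fun T hT => (hd T hT).continuousAt.continuousWithinAt
    · intro T hT
      rw [interior_Ici] at hT
      exact (hd T (le_of_lt hT)).differentiableAt.differentiableWithinAt
    · intro T hT
      rw [interior_Ici] at hT
      rw [(hd T (le_of_lt hT)).deriv]
      exact sub_nonneg.2 (hQ T hT)
  refine le_of_tendsto_of_tendsto (F_tendsto c' p' q' hp') (F_tendsto c p q hp) ?_
  filter_upwards [Filter.eventually_ge_atTop 0] with T hT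
  have := hm (Set.mem_Ici.2 le_rfl) (Set.mem_Ici.2 hT) hT
  simp only [F_zero] at this
  rw [htr]
  linarith

/-- Schwarz-type inequality from a Kraus representation. -/
lemma J_kraus {ι : Type*} [Fintype ι] (K : ι → Matrix n n ℂ) (hK : ∑ a, (K a)ᴴ * K a = 1)
    (t : ℝ) (ht : 0 ≤ t) (ρ σ Y : Matrix n n ℂ) (hρ : ρ.PosSemidef) (hσ : σ.PosSemidef) :
    J t (∑ a, K a * ρ * (K a)ᴴ) (∑ a, K a * σ * (K a)ᴴ) Y ≤
      J t ρ σ (∑ a, (K a)ᴴ * Y * K a) := by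
  have h1 : ∀ (τ Z : Matrix n n ℂ), ((∑ a, K a * τ * (K a)ᴴ) * Z).trace =
      (τ * ∑ a, (K a)ᴴ * Z * K a).trace := by
    intro τ Z
    rw [Finset.sum_mul, Finset.mul_sum, Matrix.trace_sum, Matrix.trace_sum]
    refine Finset.sum_congr rfl fun a _ => ?_
    rw [Matrix.mul_assoc, Matrix.mul_assoc, Matrix.trace_mul_comm]
    simp only [Matrix.mul_assoc]
  have h2 : ∀ (τ Z : Matrix n n ℂ), τ.PosSemidef →
      (τ * ((∑ a, (K a)ᴴ * Z * K a) * (∑ a, (K a)ᴴ * Z * K a)ᴴ)).trace.re ≤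
      (τ * ∑ a, (K a)ᴴ * (Z * Zᴴ) * K a).trace.re := by
    intro τ Z hτ
    set X := ∑ a, (K a)ᴴ * Z * K a with hX
    have e1 : ∑ a, ((K a)ᴴ * Z - X * (K a)ᴴ) * ((K a)ᴴ * Z - X * (K a)ᴴ)ᴴ =
        ∑ a, (K a)ᴴ * (Z * Zᴴ) * K a - X * Xᴴ := by
      have e2 : ∀ a, ((K a)ᴴ * Z - X * (K a)ᴴ) * ((K a)ᴴ * Z - X * (K a)ᴴ)ᴴ =
          (K a)ᴴ * (Z * Zᴴ) * K a - ((K a)ᴴ * Z * K a) * Xᴴ - X * ((K a)ᴴ * Z * K a)ᴴ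
            + X * ((K a)ᴴ * K a) * Xᴴ := by
        intro a
        simp only [Matrix.conjTranspose_mul, Matrix.conjTranspose_sub,
          Matrix.conjTranspose_conjTranspose]
        noncomm_ring
      simp only [e2, Finset.sum_add_distrib, Finset.sum_sub_distrib, ← Finset.sum_mul,
        ← Finset.mul_sum, ← Matrix.conjTranspose_sum, hK, ← hX]
      noncomm_ring
    have e3 : 0 ≤ (τ * ∑ a, ((K a)ᴴ * Z - X * (K a)ᴴ) * ((K a)ᴴ * Z - X * (K a)ᴴ)ᴴ).trace.re := by
      rw [Finset.mul_sum, Matrix.trace_sum, Complex.re_sum]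
      refine Finset.sum_nonneg fun a _ => ?_
      generalize (K a)ᴴ * Z - X * (K a)ᴴ = B
      rw [← Matrix.mul_assoc, Matrix.trace_mul_comm, ← Matrix.mul_assoc]
      have := (hτ.conjTranspose_mul_mul_same B).trace_nonneg
      exact (Complex.le_def.1 this).1
    rw [e1, Matrix.mul_sub, Matrix.trace_sub, Complex.sub_re] at e3
    linarith
  have h3 := h2 σ Y hσ
  have h4 := h2 ρ Yᴴ hρ
  have h5 : ∑ a, (K a)ᴴ * Yᴴ * K a = (∑ a, (K a)ᴴ * Y * K a)ᴴ := by
    rw [Matrix.conjTranspose_sum]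
    refine Finset.sum_congr rfl fun a _ => ?_
    simp [Matrix.mul_assoc]
  rw [h5, Matrix.conjTranspose_conjTranspose, Matrix.conjTranspose_conjTranspose] at h4
  rw [J, J, h1, h1, h1]
  have := mul_le_mul_of_nonneg_left h4 ht
  linarith

end MI

namespace MI
open scoped Kronecker

lemma exists_kraus {m : ℕ} (E : Matrix (Fin m) (Fin m) ℂ →ₗ[ℂ] Matrix (Fin m) (Fin m) ℂ)
    (htr : ∀ A : Matrix (Fin m) (Fin m) ℂ, (E A).trace = A.trace)
    (hCP : ∀ (l : ℕ) (M : Matrix (Fin m × Fin l) (Fin m × Fin l) ℂ),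
      M.PosSemidef → (tensorId (fun A => E A) M).PosSemidef) :
    ∃ K : Fin m × Fin m → Matrix (Fin m) (Fin m) ℂ,
      (∀ A, E A = ∑ a, K a * A * (K a)ᴴ) ∧ ∑ a, (K a)ᴴ * K a = 1 := by
  let v : Fin m × Fin m → ℂ := fun p => if p.1 = p.2 then 1 else 0
  have hC := hCP m (Matrix.vecMulVec v (star v)) (Matrix.posSemidef_vecMulVec_self_star v)
  obtain ⟨B, hB⟩ : ∃ B : Matrix (Fin m × Fin m) (Fin m × Fin m) ℂ,
      tensorId (fun A => E A) (Matrix.vecMulVec v (star v)) = Bᴴ * B := by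
    open scoped MatrixOrder in
    exact CStarAlgebra.nonneg_iff_eq_star_mul_self.1 hC.nonneg
  have hE : ∀ c d i j, E (Matrix.single c d 1) i j = ∑ a, star (B a (i, c)) * B a (j, d) := by
    intro c d i j
    have := congrFun (congrFun hB (i, c)) (j, d)
    rw [Matrix.mul_apply] at this
    simp only [Matrix.conjTranspose_apply] at this
    rw [← this]
    simp only [tensorId, Matrix.of_apply]
    refine congrArg (fun Z => E Z i j) ?_
    ext x y
    simp only [Matrix.single_apply, Matrix.of_apply, Matrix.vecMulVec_apply, v, Pi.star_apply]
    by_cases h1 : x = c <;> by_cases h2 : y = d <;>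
      simp [h1, h2, @eq_comm _ c x, @eq_comm _ d y]
  let K : Fin m × Fin m → Matrix (Fin m) (Fin m) ℂ := fun a => Matrix.of fun i j => star (B a (i, j))
  have hK : ∀ A, E A = ∑ a, K a * A * (K a)ᴴ := by
    intro A
    ext i j
    conv_lhs => rw [Matrix.matrix_eq_sum_single A]
    have hs : ∀ c d, Matrix.single c d (A c d) = A c d • Matrix.single c d (1:ℂ) := by
      intro c d; simp [Matrix.smul_single]
    simp only [hs, map_sum, map_smul, Matrix.sum_apply, Matrix.smul_apply, hE, smul_eq_mul,
      Matrix.mul_apply, Matrix.conjTranspose_apply, K, Matrix.of_apply, star_star,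
      Finset.mul_sum, Finset.sum_mul]
    calc _ = ∑ c, ∑ a, ∑ d, A c d * (star (B a (i, c)) * B a (j, d)) :=
          Finset.sum_congr rfl fun c _ => Finset.sum_comm
      _ = ∑ a, ∑ c, ∑ d, A c d * (star (B a (i, c)) * B a (j, d)) := Finset.sum_comm
      _ = ∑ a, ∑ d, ∑ c, A c d * (star (B a (i, c)) * B a (j, d)) :=
          Finset.sum_congr rfl fun c _ => Finset.sum_comm
      _ = _ := Finset.sum_congr rfl fun a _ => Finset.sum_congr rfl fun d _ =>
          Finset.sum_congr rfl fun c _ => by ring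
  refine ⟨K, hK, ?_⟩
  refine Matrix.ext_iff_trace_mul_right.2 fun A => ?_
  rw [Matrix.one_mul, ← htr A, hK A, Finset.sum_mul, Matrix.trace_sum, Matrix.trace_sum]
  refine Finset.sum_congr rfl fun a _ => ?_
  rw [Matrix.mul_assoc, Matrix.trace_mul_comm]

lemma tensorId_kraus {m k : ℕ} {ι : Type*} [Fintype ι]
    (E : Matrix (Fin m) (Fin m) ℂ → Matrix (Fin m) (Fin m) ℂ)
    (K : ι → Matrix (Fin m) (Fin m) ℂ) (hK : ∀ A, E A = ∑ a, K a * A * (K a)ᴴ)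
    (M : Matrix (Fin m × Fin k) (Fin m × Fin k) ℂ) :
    tensorId E M = ∑ a, (K a ⊗ₖ (1 : Matrix (Fin k) (Fin k) ℂ)) * M * (K a ⊗ₖ 1)ᴴ := by
  ext ⟨i, x⟩ ⟨j, y⟩
  simp only [tensorId, Matrix.of_apply, hK, Matrix.sum_apply]
  refine Finset.sum_congr rfl fun a _ => ?_
  simp [Matrix.mul_apply, Fintype.sum_prod_type, Matrix.one_apply, apply_ite]

lemma kraus_one {m k : ℕ} {ι : Type*} [Fintype ι]
    (K : ι → Matrix (Fin m) (Fin m) ℂ) (hK : ∑ a, (K a)ᴴ * K a = 1) :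
    ∑ a, (K a ⊗ₖ (1 : Matrix (Fin k) (Fin k) ℂ))ᴴ * (K a ⊗ₖ 1) = 1 := by
  have : ∀ a, (K a ⊗ₖ (1 : Matrix (Fin k) (Fin k) ℂ))ᴴ * (K a ⊗ₖ 1) =
      ((K a)ᴴ * K a) ⊗ₖ (1 : Matrix (Fin k) (Fin k) ℂ) := by
    intro a
    rw [Matrix.conjTranspose_kronecker, ← Matrix.mul_kronecker_mul]; simp
  simp only [this]
  rw [← Matrix.one_kronecker_one, ← hK]
  ext ⟨i, x⟩ ⟨j, y⟩
  simp [Matrix.sum_apply, Finset.sum_mul]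

lemma tensorId_kron {m k : ℕ} (E : Matrix (Fin m) (Fin m) ℂ →ₗ[ℂ] Matrix (Fin m) (Fin m) ℂ)
    (A : Matrix (Fin m) (Fin m) ℂ) (B : Matrix (Fin k) (Fin k) ℂ) :
    tensorId (fun A => E A) (A ⊗ₖ B) = E A ⊗ₖ B := by
  ext ⟨i, x⟩ ⟨j, y⟩
  have : (Matrix.of fun a c => (A ⊗ₖ B) (a, x) (c, y)) = B x y • A := by
    ext; simp [mul_comm]
  simp only [tensorId, Matrix.of_apply, this]
  simp [mul_comm]

lemma ptrA_tensorId {m k : ℕ} (E : Matrix (Fin m) (Fin m) ℂ →ₗ[ℂ] Matrix (Fin m) (Fin m) ℂ)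
    (M : Matrix (Fin m × Fin k) (Fin m × Fin k) ℂ) :
    ptrA (tensorId (fun A => E A) M) = E (ptrA M) := by
  have : ptrA M = ∑ b, Matrix.of fun a c => M (a, b) (c, b) := by
    ext; simp [ptrA, Matrix.sum_apply]
  rw [this, map_sum]
  ext
  simp [ptrA, tensorId, Matrix.sum_apply]

lemma ptrB_tensorId {m k : ℕ} (E : Matrix (Fin m) (Fin m) ℂ →ₗ[ℂ] Matrix (Fin m) (Fin m) ℂ)
    (htr : ∀ A : Matrix (Fin m) (Fin m) ℂ, (E A).trace = A.trace)
    (M : Matrix (Fin m × Fin k) (Fin m × Fin k) ℂ) :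
    ptrB (tensorId (fun A => E A) M) = ptrB M := by
  ext x y
  exact htr (Matrix.of fun a c => M (a, x) (c, y))

lemma ptrA_psd {m k : ℕ} (M : Matrix (Fin m × Fin k) (Fin m × Fin k) ℂ) (hM : M.PosSemidef) :
    (ptrA M).PosSemidef := by
  have : ptrA M = ∑ b, M.submatrix (fun a => (a, b)) (fun a => (a, b)) := by
    ext; simp [ptrA, Matrix.sum_apply]
  rw [this]
  exact Matrix.posSemidef_sum _ fun b _ => hM.submatrix _

lemma ptrB_psd {m k : ℕ} (M : Matrix (Fin m × Fin k) (Fin m × Fin k) ℂ) (hM : M.PosSemidef) :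
    (ptrB M).PosSemidef := by
  have : ptrB M = ∑ b, M.submatrix (fun a => (b, a)) (fun a => (b, a)) := by
    ext; simp [ptrB, Matrix.sum_apply]
  rw [this]
  exact Matrix.posSemidef_sum _ fun b _ => hM.submatrix _

lemma spec {n : Type*} [Fintype n] [DecidableEq n] (A : Matrix n n ℂ) (hA : A.PosSemidef) :
    ∃ (U : Matrix n n ℂ) (p : n → ℝ), U * Uᴴ = 1 ∧ Uᴴ * U = 1 ∧ (∀ i, 0 ≤ p i) ∧
      A = U * dg p * Uᴴ ∧ vnEntropy A = - ∑ i, p i * Real.log (p i) := by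
  have h := hA.isHermitian
  let U : Matrix n n ℂ := h.eigenvectorUnitary
  have hU : U * Uᴴ = 1 := Unitary.coe_mul_star_self h.eigenvectorUnitary
  have hU' : Uᴴ * U = 1 := Unitary.coe_star_mul_self h.eigenvectorUnitary
  have hs : A = U * dg h.eigenvalues * Uᴴ := by
    have := h.spectral_theorem
    rw [Unitary.conjStarAlgAut_apply] at this
    exact this
  refine ⟨U, h.eigenvalues, hU, hU', hA.eigenvalues_nonneg, hs, ?_⟩
  have hl : matLog A = U * dg (fun i => Real.log (h.eigenvalues i)) * Uᴴ := by
    rw [matLog, dif_pos h]; rfl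
  rw [vnEntropy, hl]
  have : (A * (U * dg (fun i => Real.log (h.eigenvalues i)) * Uᴴ)).trace =
      (dg h.eigenvalues * dg (fun i => Real.log (h.eigenvalues i))).trace := by
    generalize dg (fun i => Real.log (h.eigenvalues i)) = L
    refine (congrArg (fun B => (B * (U * L * Uᴴ)).trace) hs).trans ?_
    rw [Matrix.mul_assoc, Matrix.mul_assoc, Matrix.trace_mul_comm]
    simp only [Matrix.mul_assoc]
    rw [hU', Matrix.mul_one, ← Matrix.mul_assoc Uᴴ, hU', Matrix.one_mul]
  rw [this, dg, dg, Matrix.diagonal_mul_diagonal, Matrix.trace_diagonal, Complex.re_sum]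
  simp

lemma ov_sum {n : Type*} [Fintype n] [DecidableEq n] (U W : Matrix n n ℂ) (p : n → ℝ) (j : n) :
    ∑ i, ov U W j i * p i = ((Wᴴ * (U * dg p * Uᴴ) * W) j j).re := by
  have : Wᴴ * (U * dg p * Uᴴ) * W = (Wᴴ * U) * dg p * (Wᴴ * U)ᴴ := by
    simp [Matrix.mul_assoc]
  rw [this, Matrix.mul_apply, Complex.re_sum]
  refine Finset.sum_congr rfl fun i _ => ?_
  rw [dg, Matrix.mul_diagonal, ov, Matrix.conjTranspose_apply]
  simp [Complex.normSq_apply]; ring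

lemma ov_sum' {n : Type*} [Fintype n] [DecidableEq n] (U W : Matrix n n ℂ) (i : n)
    (hU : Uᴴ * U = 1) (hW : W * Wᴴ = 1) : ∑ j, ov U W j i = 1 := by
  have : (Wᴴ * U)ᴴ * (Wᴴ * U) = 1 := by
    simp only [Matrix.conjTranspose_mul, Matrix.conjTranspose_conjTranspose, Matrix.mul_assoc]
    rw [← Matrix.mul_assoc W, hW, Matrix.one_mul, hU]
  have h2 := congrArg Complex.re (congrFun (congrFun this i) i)
  rw [Matrix.mul_apply, Complex.re_sum] at h2
  simp only [Matrix.one_apply_eq, Complex.one_re] at h2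
  rw [← h2]
  refine Finset.sum_congr rfl fun j _ => ?_
  rw [ov, Matrix.conjTranspose_apply]
  simp [Complex.normSq_apply]

lemma ov_total {n : Type*} [Fintype n] [DecidableEq n] (U W : Matrix n n ℂ) (p : n → ℝ)
    (hW : W * Wᴴ = 1) :
    ∑ j, ∑ i, ov U W j i * p i = (U * dg p * Uᴴ).trace.re := by
  simp only [ov_sum]
  rw [← Complex.re_sum]
  change (Matrix.trace (Wᴴ * (U * dg p * Uᴴ) * W)).re = _
  rw [Matrix.mul_assoc, Matrix.trace_mul_comm, Matrix.mul_assoc, hW, Matrix.mul_one]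

lemma ptrA_conj {m k : ℕ} (V : Matrix (Fin m) (Fin m) ℂ) (Z : Matrix (Fin k) (Fin k) ℂ)
    (hZ : Z * Zᴴ = 1) (M : Matrix (Fin m × Fin k) (Fin m × Fin k) ℂ) :
    ptrA ((V ⊗ₖ Z)ᴴ * M * (V ⊗ₖ Z)) = Vᴴ * ptrA M * V := by
  have hz : ∀ x y, ∑ b, Z x b * star (Z y b) = if x = y then 1 else 0 := by
    intro x y
    have := congrFun (congrFun hZ x) y
    rw [Matrix.mul_apply, Matrix.one_apply] at this
    simpa using this
  ext a c
  simp only [ptrA, Matrix.of_apply, Matrix.mul_apply, Fintype.sum_prod_type,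
    Matrix.conjTranspose_apply, Matrix.kroneckerMap_apply, Finset.sum_mul, Finset.mul_sum, star_mul']
  calc _ = ∑ i, ∑ x, ∑ j, ∑ y, star (V j a) * M (j, y) (i, x) * V i c *
        ∑ b, Z x b * star (Z y b) := by
        simp only [Finset.mul_sum]
        rw [Finset.sum_comm]
        refine Finset.sum_congr rfl fun i _ => ?_
        rw [Finset.sum_comm]
        refine Finset.sum_congr rfl fun x _ => ?_
        rw [Finset.sum_comm]
        refine Finset.sum_congr rfl fun j _ => ?_
        rw [Finset.sum_comm]
        refine Finset.sum_congr rfl fun y _ => ?_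
        refine Finset.sum_congr rfl fun b _ => ?_
        ring
    _ = _ := by
        simp only [hz, mul_ite, mul_one, mul_zero, Finset.sum_ite_eq, Finset.mem_univ, if_true]
        refine Finset.sum_congr rfl fun i _ => ?_
        rw [Finset.sum_comm]

lemma ptrB_conj {m k : ℕ} (V : Matrix (Fin m) (Fin m) ℂ) (Z : Matrix (Fin k) (Fin k) ℂ)
    (hV : V * Vᴴ = 1) (M : Matrix (Fin m × Fin k) (Fin m × Fin k) ℂ) :
    ptrB ((V ⊗ₖ Z)ᴴ * M * (V ⊗ₖ Z)) = Zᴴ * ptrB M * Z := by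
  have hz : ∀ x y, ∑ b, V x b * star (V y b) = if x = y then 1 else 0 := by
    intro x y
    have := congrFun (congrFun hV x) y
    rw [Matrix.mul_apply, Matrix.one_apply] at this
    simpa using this
  ext a c
  simp only [ptrB, Matrix.of_apply, Matrix.mul_apply, Fintype.sum_prod_type,
    Matrix.conjTranspose_apply, Matrix.kroneckerMap_apply, Finset.sum_mul, Finset.mul_sum, star_mul']
  calc _ = ∑ i, ∑ x, ∑ j, ∑ y, star (Z y a) * M (j, y) (i, x) * Z x c *
        ∑ b, V i b * star (V j b) := by
        simp only [Finset.mul_sum]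
        rw [Finset.sum_comm]
        refine Finset.sum_congr rfl fun i _ => ?_
        rw [Finset.sum_comm]
        refine Finset.sum_congr rfl fun x _ => ?_
        rw [Finset.sum_comm]
        refine Finset.sum_congr rfl fun j _ => ?_
        rw [Finset.sum_comm]
        refine Finset.sum_congr rfl fun y _ => ?_
        refine Finset.sum_congr rfl fun b _ => ?_
        ring
    _ = ∑ i, ∑ x, ∑ y, star (Z y a) * M (i, y) (i, x) * Z x c := by
        refine Finset.sum_congr rfl fun i _ => Finset.sum_congr rfl fun x _ => ?_
        rw [Finset.sum_comm]
        simp only [hz, mul_ite, mul_one, mul_zero, Finset.sum_ite_eq, Finset.mem_univ, if_true]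
    _ = _ := by
        rw [Finset.sum_comm]
        refine Finset.sum_congr rfl fun x _ => ?_
        rw [Finset.sum_comm]

lemma main_spec {m k : ℕ} (M : Matrix (Fin m × Fin k) (Fin m × Fin k) ℂ) (hM : M.PosSemidef) :
    ∃ (U W : Matrix (Fin m × Fin k) (Fin m × Fin k) ℂ) (p q : Fin m × Fin k → ℝ),
      U * Uᴴ = 1 ∧ W * Wᴴ = 1 ∧ (∀ i, 0 ≤ p i) ∧ (∀ i, 0 ≤ q i) ∧
      M = U * dg p * Uᴴ ∧ ptrA M ⊗ₖ ptrB M = W * dg q * Wᴴ ∧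
      (∀ j i, q j = 0 → ov U W j i * p i = 0) ∧ mutInfo M = RE (ov U W) p q := by
  obtain ⟨U, p, hU, hU', hp, hMU, hSM⟩ := spec M hM
  obtain ⟨V, s, hV, hV', hs, hAV, hSA⟩ := spec _ (ptrA_psd M hM)
  obtain ⟨Z, r, hZ, hZ', hr, hBZ, hSB⟩ := spec _ (ptrB_psd M hM)
  let W := V ⊗ₖ Z
  let q : Fin m × Fin k → ℝ := fun j => s j.1 * r j.2
  have hW : W * Wᴴ = 1 := by
    simp only [W]
    rw [Matrix.conjTranspose_kronecker, ← Matrix.mul_kronecker_mul, hV, hZ, Matrix.one_kronecker_one]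
  have hdq : dg q = dg s ⊗ₖ dg r := by
    simp only [dg, q, Matrix.diagonal_kronecker_diagonal, Complex.ofReal_mul]
  have hσ : ptrA M ⊗ₖ ptrB M = W * dg q * Wᴴ := by
    simp only [W]
    rw [hdq, Matrix.conjTranspose_kronecker, ← Matrix.mul_kronecker_mul,
      ← Matrix.mul_kronecker_mul, ← hAV, ← hBZ]
  have hnn : ∀ j i, 0 ≤ ov U W j i * p i := fun j i =>
    mul_nonneg (Complex.normSq_nonneg _) (hp i)
  have hconj : ∀ {d : Type} [Fintype d] [DecidableEq d] (V A : Matrix d d ℂ) (s : d → ℝ),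
      Vᴴ * V = 1 → A = V * dg s * Vᴴ → Vᴴ * A * V = dg s := by
    intro d _ _ V A s hV' hA
    rw [hA]
    simp only [Matrix.mul_assoc]
    rw [hV', ← Matrix.mul_assoc, hV']; simp
  have hsA : ∀ a, ∑ b, ∑ i, ov U W (a, b) i * p i = s a := by
    intro a
    simp only [ov_sum, ← hMU]
    rw [← Complex.re_sum]
    have h1 := congrFun (congrFun (ptrA_conj V Z hZ M) a) a
    rw [hconj V _ s hV' hAV] at h1
    have h2 := congrArg Complex.re h1
    simpa [ptrA, dg, W] using h2
  have hsB : ∀ b, ∑ a, ∑ i, ov U W (a, b) i * p i = r b := by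
    intro b
    simp only [ov_sum, ← hMU]
    rw [← Complex.re_sum]
    have h1 := congrFun (congrFun (ptrB_conj V Z hV M) b) b
    rw [hconj Z _ r hZ' hBZ] at h1
    have h2 := congrArg Complex.re h1
    simpa [ptrB, dg, W] using h2
  have sA : ∀ a b i, s a = 0 → ov U W (a, b) i * p i = 0 := by
    intro a b i h
    have h1 := hsA a
    rw [h, Finset.sum_eq_zero_iff_of_nonneg
      (fun b _ => Finset.sum_nonneg fun i _ => hnn _ _)] at h1
    have h2 := h1 b (Finset.mem_univ _)
    rw [Finset.sum_eq_zero_iff_of_nonneg (fun i _ => hnn _ _)] at h2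
    exact h2 i (Finset.mem_univ _)
  have sB : ∀ a b i, r b = 0 → ov U W (a, b) i * p i = 0 := by
    intro a b i h
    have h1 := hsB b
    rw [h, Finset.sum_eq_zero_iff_of_nonneg
      (fun b _ => Finset.sum_nonneg fun i _ => hnn _ _)] at h1
    have h2 := h1 a (Finset.mem_univ _)
    rw [Finset.sum_eq_zero_iff_of_nonneg (fun i _ => hnn _ _)] at h2
    exact h2 i (Finset.mem_univ _)
  refine ⟨U, W, p, q, hU, hW, hp, fun j => mul_nonneg (hs _) (hr _), hMU, hσ, ?_, ?_⟩
  · rintro ⟨a, b⟩ i h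
    rcases mul_eq_zero.1 h with h | h
    · exact sA a b i h
    · exact sB a b i h
  · have e1 : RE (ov U W) p q = ∑ j : Fin m × Fin k, ∑ i, (ov U W j i * (p i * Real.log (p i))
        - ov U W j i * p i * Real.log (s j.1) - ov U W j i * p i * Real.log (r j.2)) := by
      refine Finset.sum_congr rfl fun j _ => Finset.sum_congr rfl fun i _ => ?_
      obtain ⟨a, b⟩ := j
      by_cases h1 : s a = 0
      · have := sA a b i h1
        rw [← mul_assoc, this]; simp
      by_cases h2 : r b = 0
      · have := sB a b i h2
        rw [← mul_assoc, this]; simp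
      simp only [q]
      rw [Real.log_mul h1 h2]
      ring
    have e2 : ∑ j, ∑ i, ov U W j i * (p i * Real.log (p i)) = ∑ i, p i * Real.log (p i) := by
      rw [Finset.sum_comm]
      refine Finset.sum_congr rfl fun i _ => ?_
      rw [← Finset.sum_mul, ov_sum' U W i hU' hW, one_mul]
    have e3 : ∑ j : Fin m × Fin k, ∑ i, ov U W j i * p i * Real.log (s j.1) =
        ∑ a, s a * Real.log (s a) := by
      rw [Fintype.sum_prod_type]
      refine Finset.sum_congr rfl fun a _ => ?_
      simp only [← Finset.sum_mul, hsA]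
    have e4 : ∑ j : Fin m × Fin k, ∑ i, ov U W j i * p i * Real.log (r j.2) =
        ∑ b, r b * Real.log (r b) := by
      rw [Fintype.sum_prod_type, Finset.sum_comm]
      refine Finset.sum_congr rfl fun b _ => ?_
      simp only [← Finset.sum_mul, hsB]
    rw [e1]
    simp only [Finset.sum_sub_distrib]
    rw [e2, e3, e4, mutInfo, hSM, hSA, hSB]
    ring

end MI

open scoped Kronecker

/-- Quantum mutual information is monotonically nonincreasing under local
trace-preserving completely positive maps on the system. -/
theorem mutInfo_monotone_local_cptp {m k : ℕ}
    (E : Matrix (Fin m) (Fin m) ℂ →ₗ[ℂ] Matrix (Fin m) (Fin m) ℂ)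
    (htr : ∀ A : Matrix (Fin m) (Fin m) ℂ, (E A).trace = A.trace)
    (hCP : ∀ (l : ℕ) (M : Matrix (Fin m × Fin l) (Fin m × Fin l) ℂ),
      M.PosSemidef → (tensorId (fun A => E A) M).PosSemidef)
    (ρ : Matrix (Fin m × Fin k) (Fin m × Fin k) ℂ)
    (hρ : ρ.PosSemidef) (hρtr : ρ.trace = 1) :
    mutInfo (tensorId (fun A => E A) ρ) ≤ mutInfo ρ := by
  obtain ⟨K, hK, hK1⟩ := MI.exists_kraus E htr hCP
  have hT : ∀ M, tensorId (fun A => E A) M = ∑ a, (K a ⊗ₖ (1 : Matrix (Fin k) (Fin k) ℂ)) * M * (K a ⊗ₖ 1)ᴴ :=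
    MI.tensorId_kraus (fun A => E A) K hK
  have hρ' := hCP k ρ hρ
  obtain ⟨U, W, p, q, hU, hW, hp, hq, hM, hσ, hs, hI⟩ := MI.main_spec ρ hρ
  obtain ⟨U', W', p', q', hU', hW', hp', hq', hM', hσ', hs', hI'⟩ := MI.main_spec _ hρ'
  have hσT : tensorId (fun A => E A) (ptrA ρ ⊗ₖ ptrB ρ) = W' * MI.dg q' * W'ᴴ := by
    rw [MI.tensorId_kron, ← hσ', MI.ptrA_tensorId, MI.ptrB_tensorId E htr]
  have hσpsd : (ptrA ρ ⊗ₖ ptrB ρ).PosSemidef := (MI.ptrA_psd ρ hρ).kronecker (MI.ptrB_psd ρ hρ)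
  rw [hI, hI']
  refine MI.RE_mono _ _ p q p' q' hp hq hs hp' hq' hs' ?_ ?_
  · rw [MI.ov_total _ _ _ hW, MI.ov_total _ _ _ hW', ← hM, ← hM', hT, Matrix.trace_sum]
    have : ∀ a, ((K a ⊗ₖ (1 : Matrix (Fin k) (Fin k) ℂ)) * ρ * (K a ⊗ₖ 1)ᴴ).trace =
        (((K a ⊗ₖ (1 : Matrix (Fin k) (Fin k) ℂ))ᴴ * (K a ⊗ₖ 1)) * ρ).trace := by
      intro a
      rw [Matrix.trace_mul_comm, Matrix.mul_assoc]
    simp only [this]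
    rw [← Matrix.trace_sum, ← Finset.sum_mul, MI.kraus_one K hK1, Matrix.one_mul]
  · intro t ht
    obtain ⟨Y, hY⟩ := MI.exists_J t ht U' W' p' q' hp' hq' hU' hW'
    rw [← hY, ← hM', ← hσT, hT, hT]
    refine (MI.J_kraus _ (MI.kraus_one K hK1) t ht.le ρ _ Y hρ hσpsd).trans ?_
    rw [hσ]
    conv_lhs => rw [hM]
    exact MI.J_le t ht U W _ p q hp hq hU hW
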